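/- Let n ≥ 1 and for i ∈ {1,...,n} let A_{n,i} denote the number of monotone triangles of order n with bottom row (1,2,...,n) such that exactly i of the entries a_{1,1}, a_{2,1}, ..., a_{n,1} are equal to 1. Then for every i ∈ {1,...,n}: A_{n,i} = ∑_{k=1}^{n} binom(2n−1−i, k−i) · (−1)^{k+n} · A_{n,k}, where binom(m,j) = 0 whenever j < 0. -/

import Mathlib

/-- The Gelfand-Tsetlin condition: `a_{i+1,j} ≤ a_{i,j} ≤ a_{i+1,j+1}` for all entries
of the triangular array `(a_{i,j})_{1 ≤ j ≤ i ≤ n}`. -/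
def IsGT {n : ℕ} (a : ∀ i : Fin n, Fin (i.1 + 1) → ℤ) : Prop :=
  ∀ i : Fin n, ∀ hi : i.1 + 1 < n, ∀ j : Fin (i.1 + 1),
    a ⟨i.1 + 1, hi⟩ ⟨j.1, by have := j.isLt; show j.1 < i.1 + 1 + 1; omega⟩ ≤ a i j ∧
      a i j ≤ a ⟨i.1 + 1, hi⟩ ⟨j.1 + 1, by have := j.isLt; show j.1 + 1 < i.1 + 1 + 1; omega⟩

/-- Every row of the triangular array is strictly increasing. -/
def StrictRows {n : ℕ} (a : ∀ i : Fin n, Fin (i.1 + 1) → ℤ) : Prop :=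
  ∀ i : Fin n, ∀ j : Fin (i.1 + 1), ∀ h : j.1 + 1 < i.1 + 1, a i j < a i ⟨j.1 + 1, h⟩

/-- Every row except possibly the bottom row is strictly increasing. -/
def StrictRowsAboveBottom {n : ℕ} (a : ∀ i : Fin n, Fin (i.1 + 1) → ℤ) : Prop :=
  ∀ i : Fin n, i.1 + 1 < n →
    ∀ j : Fin (i.1 + 1), ∀ h : j.1 + 1 < i.1 + 1, a i j < a i ⟨j.1 + 1, h⟩

/-- The bottom row (row `n`) of a triangular array equals `k`. -/
def BottomRow {n : ℕ} (a : ∀ i : Fin n, Fin (i.1 + 1) → ℤ) (k : Fin n → ℤ) : Prop :=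
  ∀ i : Fin n, i.1 + 1 = n → ∀ j : Fin (i.1 + 1),
    a i j = k ⟨j.1, by have := j.isLt; omega⟩

/-- `A_{n,i}`: the number of monotone triangles of order `n` with bottom row
`(1, 2, …, n)` in which exactly `i` of the entries `a_{1,1}, a_{2,1}, …, a_{n,1}`
are equal to `1`. -/
noncomputable def Arefined (n : ℕ) (i : ℕ) : ℕ :=
  Nat.card {a : ∀ r : Fin n, Fin (r.1 + 1) → ℤ //
    IsGT a ∧ StrictRows a ∧
    (∀ r : Fin n, r.1 + 1 = n → ∀ j : Fin (r.1 + 1), a r j = (j.1 : ℤ) + 1) ∧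
    (Finset.univ.filter
      (fun r : Fin n => a r ⟨0, Nat.succ_pos r.1⟩ = 1)).card = i}

/-!
Fischer's operator formula: the number of monotone triangles with bottom row `k` is `α k`, where `α`
is the operator `∏_{p < q} (1 - E_p + E_p E_q)`, with `E_p` the unit shift of the `p`-th coordinate,
applied to `det (choose (k i) j)`. Indeed the Pascal rule and the cancellation for coinciding
coordinates make `α` satisfy the recurrence over interlacing rows. Removing the bottom row
repeatedly then gives `A_{n,i} = (-1)^(i-1) Δ^(i-1) g 2`, where `g x = α (x, 2, …, n)`.

Symmetric functions of the `E_p - 1` without constant term annihilate the determinant. Modulo this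
relation, the operator has a symmetry under rotation and one under reversal of the coordinates, and
together with translation invariance they give `g (2n + 2 - x) = (-1)^(n-1) g x`. The linear system
is Newton's expansion of `Δ^(i-1) g` about `2`, evaluated at the reflected point.
-/

section PairProduct

variable {M : Type*} [CommMonoid M] {n : ℕ}

/-- The product of `f p q` over all pairs of indices `p < q`. -/
def pairProd (f : Fin n → Fin n → M) : M :=
  ∏ p, ∏ q ∈ Finset.Ioi p, f p q

lemma pairProd_eq_prod_ite (f : Fin n → Fin n → M) :
    pairProd f = ∏ p, ∏ q, if p < q then f p q else 1 := by
  simp only [pairProd, ← Finset.filter_lt_eq_Ioi, Finset.prod_filter]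

lemma pairProd_mul (f g : Fin n → Fin n → M) :
    pairProd (fun p q => f p q * g p q) = pairProd f * pairProd g := by
  simp only [pairProd, Finset.prod_mul_distrib]

lemma map_pairProd {N : Type*} [CommMonoid N] (φ : M →* N) (f : Fin n → Fin n → M) :
    φ (pairProd f) = pairProd (fun p q => φ (f p q)) := by
  simp only [pairProd, map_prod]

lemma pairProd_rev (f : Fin n → Fin n → M) :
    pairProd (fun p q => f p.rev q.rev) = pairProd (fun p q => f q p) := by
  simp only [pairProd_eq_prod_ite]
  rw [← Equiv.prod_comp Fin.revPerm, Finset.prod_comm, ← Equiv.prod_comp Fin.revPerm]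
  simp only [Fin.revPerm_apply, Fin.rev_rev, Fin.rev_lt_rev]

lemma pairProd_succAbove (m : Fin (n + 1)) (f : Fin (n + 1) → Fin (n + 1) → M) :
    pairProd f =
      (∏ q, if q.castSucc < m then f (m.succAbove q) m else f m (m.succAbove q)) *
        pairProd (fun p q => f (m.succAbove p) (m.succAbove q)) := by
  have row_split (p : Fin n) :
      (∏ q, if m.succAbove p < q then f (m.succAbove p) q else 1) =
        (if p.castSucc < m then f (m.succAbove p) m else 1) *
          ∏ q, if p < q then f (m.succAbove p) (m.succAbove q) else 1 := by
    simp only [Fin.prod_univ_succAbove _ m, Fin.succAbove_lt_succAbove_iff,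
      Fin.succAbove_lt_iff_castSucc_lt]
  simp only [pairProd_eq_prod_ite]
  rw [Fin.prod_univ_succAbove _ m, Fin.prod_univ_succAbove _ m]
  simp only [lt_self_iff_false, if_false, one_mul, row_split, Finset.prod_mul_distrib]
  rw [← mul_assoc, ← Finset.prod_mul_distrib]
  congr 1
  refine Finset.prod_congr rfl fun q _ => ?_
  by_cases h : q.castSucc < m
  · simp [h, Fin.lt_succAbove_iff_le_castSucc]
  · simp [h, Fin.lt_succAbove_iff_le_castSucc, not_lt.mp h]

lemma prod_mul_pairProd_mul (x : Fin n → M) :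
    (∏ i, x i) * pairProd (fun p q => x p * x q) = (∏ i, x i) ^ n := by
  have off_diag : pairProd (fun p q => x p * x q) = ∏ i, ∏ _j ∈ ({i}ᶜ : Finset (Fin n)), x i :=
    Finset.prod_prod_Ioi_mul_eq_prod_prod_off_diag fun _ q => x q
  rw [off_diag, ← Finset.prod_mul_distrib, ← Finset.prod_pow]
  refine Finset.prod_congr rfl fun i _ => ?_
  rw [← Fintype.prod_eq_mul_prod_compl i fun _ => x i, Fin.prod_const]

lemma swap_lt_swap_iff {i j : Fin n} (hij : i.1 + 1 = j.1) {p q : Fin n}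
    (h : ¬(p = i ∧ q = j)) (h' : ¬(p = j ∧ q = i)) :
    Equiv.swap i j p < Equiv.swap i j q ↔ p < q := by
  simp only [Equiv.swap_apply_def]
  grind

lemma pairProd_swap (f : Fin n → Fin n → M) {i j : Fin n} (hij : i.1 + 1 = j.1) :
    pairProd (fun p q => f (Equiv.swap i j p) (Equiv.swap i j q)) * f i j =
      pairProd f * f j i := by
  have prod_single (a b : Fin n) (c : M) : (∏ p, ∏ q, if p = a ∧ q = b then c else 1) = c := by
    rw [Finset.prod_eq_single a, Finset.prod_eq_single b] <;> simp +contextual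
  have reindex : pairProd (fun p q => f (Equiv.swap i j p) (Equiv.swap i j q)) =
      ∏ p, ∏ q, if Equiv.swap i j p < Equiv.swap i j q then f p q else 1 := by
    rw [pairProd_eq_prod_ite, ← Equiv.prod_comp (Equiv.swap i j)]
    refine Finset.prod_congr rfl fun p _ => ?_
    rw [← Equiv.prod_comp (Equiv.swap i j)]
    simp only [Equiv.swap_apply_self]
  have hlt : i < j := by rw [Fin.lt_def]; lia
  rw [reindex, pairProd_eq_prod_ite, ← prod_single i j (f i j), ← prod_single j i (f j i)]
  simp only [← Finset.prod_mul_distrib]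
  refine Finset.prod_congr rfl fun p _ => Finset.prod_congr rfl fun q _ => ?_
  by_cases h : p = i ∧ q = j
  · obtain ⟨rfl, rfl⟩ := h
    simp [hlt, hlt.not_gt, hlt.ne]
  by_cases h' : p = j ∧ q = i
  · obtain ⟨rfl, rfl⟩ := h'
    simp [hlt, hlt.not_gt, hlt.ne']
  simp only [h, h', if_false, mul_one, swap_lt_swap_iff hij h h']

end PairProduct

section Weight

variable {S : Type*} [CommRing S] {n : ℕ}

/-- The factor `1 - E_p + E_p E_q` of Fischer's operator formula. -/
def weight (a b : S) : S := 1 - a + a * b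

/-- The product of the factors `weight (x p) (x q)` over all `p < q`; Fischer's operator is the
case where `x p` shifts the `p`-th variable. -/
def weightProd (x : Fin n → S) : S :=
  pairProd fun p q => weight (x p) (x q)

lemma map_weightProd {T : Type*} [CommRing T] (φ : S →+* T) (x : Fin n → S) :
    φ (weightProd x) = weightProd (fun i => φ (x i)) := by
  have map_weight (a b : S) : φ (weight a b) = weight (φ a) (φ b) := by
    simp only [weight, map_add, map_sub, map_mul, map_one]
  simp only [weightProd, ← map_weight]
  exact map_pairProd (φ : S →* T) _

lemma weightProd_comp_swap (x : Fin n → S) {i j : Fin n} (hij : i.1 + 1 = j.1) :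
    weightProd (x ∘ Equiv.swap i j) * weight (x i) (x j) = weightProd x * weight (x j) (x i) :=
  pairProd_swap (fun p q => weight (x p) (x q)) hij

lemma weightProd_eq_of_apply_eq_one (x : Fin (n + 1) → S) {m : Fin (n + 1)} (hm : x m = 1) :
    weightProd x =
      (∏ q : Fin n, if q.castSucc < m then 1 else x (m.succAbove q)) *
        weightProd (x ∘ m.succAbove) := by
  refine (pairProd_succAbove m _).trans ?_
  simp only [hm, weight, mul_one, sub_add_cancel, sub_self, one_mul, zero_add]
  rfl

lemma weightProd_rev {x y : Fin n → S} (hxy : ∀ i, x i * y i = 1) (hx : ∏ i, x i = 1) :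
    weightProd (fun i => y i.rev) = weightProd x := by
  have pair_one : pairProd (fun p q => x p * x q) = 1 := by
    simpa only [hx, one_mul, one_pow] using prod_mul_pairProd_mul x
  have weight_inv (p q : Fin n) : x p * x q * weight (y q) (y p) = weight (x p) (x q) := by
    unfold weight
    linear_combination (x q * y q) * hxy p + (1 - x p) * hxy q
  calc weightProd (fun i => y i.rev)
      = pairProd (fun p q => weight (y q) (y p)) :=
        pairProd_rev fun p q => weight (y p) (y q)
    _ = pairProd (fun p q => x p * x q) * pairProd (fun p q => weight (y q) (y p)) := by
        rw [pair_one, one_mul]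
    _ = weightProd x := by simp only [← pairProd_mul, weight_inv, weightProd]

-- Multiplying either product over `q` by `weight (x 0) (x 0) = 1 - x 0 + x 0 ^ 2` completes it to
-- a product over all indices, which the hypothesis evaluates.
lemma prod_weight_zero_right {x : Fin (n + 1) → S}
    (hx : ∀ a b : S, ∏ i, (b * (x i - 1) + a) = a ^ (n + 1)) :
    ∏ q : Fin n, weight (x q.succ) (x 0) =
      x 0 ^ (n + 1) * ∏ q : Fin n, weight (x 0) (x q.succ) := by
  have left : weight (x 0) (x 0) * ∏ q : Fin n, weight (x 0) (x q.succ) = 1 := by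
    rw [← Fin.prod_univ_succ fun q => weight (x 0) (x q)]
    convert hx 1 (x 0) using 1
    · exact Finset.prod_congr rfl fun q _ => by unfold weight; ring
    · rw [one_pow]
  have right : weight (x 0) (x 0) * ∏ q : Fin n, weight (x q.succ) (x 0) = x 0 ^ (n + 1) := by
    rw [← Fin.prod_univ_succ fun q => weight (x q) (x 0), ← hx (x 0) (x 0 - 1)]
    exact Finset.prod_congr rfl fun q _ => by unfold weight; ring
  linear_combination (∏ q : Fin n, weight (x 0) (x q.succ)) * right
    - (∏ q : Fin n, weight (x q.succ) (x 0)) * left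

lemma weightProd_comp_finRotate {x : Fin (n + 1) → S}
    (hx : ∀ a b : S, ∏ i, (b * (x i - 1) + a) = a ^ (n + 1)) :
    weightProd (x ∘ finRotate (n + 1)) = x 0 ^ (n + 1) * weightProd x := by
  have split_first : weightProd x =
      (∏ q : Fin n, weight (x 0) (x q.succ)) * weightProd (x ∘ Fin.succ) := by
    refine (pairProd_succAbove 0 _).trans ?_
    simp only [Fin.not_lt_zero, if_false, Fin.succAbove_zero]
    rfl
  have split_last : weightProd (x ∘ finRotate (n + 1)) =
      (∏ q : Fin n, weight (x q.succ) (x 0)) * weightProd (x ∘ Fin.succ) := by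
    refine (pairProd_succAbove (Fin.last n) _).trans ?_
    simp only [Fin.castSucc_lt_last, if_true, Fin.succAbove_last, Function.comp_apply,
      finRotate_apply, Fin.coeSucc_eq_succ, Fin.last_add_one]
    rfl
  rw [split_last, split_first, prod_weight_zero_right hx, mul_assoc]

lemma prod_mul_add_eq_pow_of_sum_powersetCard {ι : Type*} [Fintype ι] {z : ι → S}
    (hz : ∀ j, ∑ T ∈ Finset.powersetCard (j + 1) Finset.univ, ∏ i ∈ T, z i = 0) (a b : S) :
    ∏ i, (b * z i + a) = a ^ Fintype.card ι := by
  classical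
  rw [Finset.prod_add, Finset.sum_powerset, Finset.card_univ, Finset.sum_range_succ']
  have higher_terms (j : ℕ) :
      ∑ T ∈ Finset.powersetCard (j + 1) (Finset.univ : Finset ι),
        (∏ i ∈ T, b * z i) * ∏ _i ∈ Finset.univ \ T, a = 0 := by
    rw [← mul_zero (b ^ (j + 1) * a ^ (Fintype.card ι - (j + 1))), ← hz j, Finset.mul_sum]
    refine Finset.sum_congr rfl fun T hT => ?_
    rw [Finset.prod_mul_distrib, Finset.prod_const, Finset.prod_const, Finset.card_univ_sdiff,
      (Finset.mem_powersetCard.mp hT).2]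
    ring
  rw [Finset.sum_eq_zero fun j _ => higher_terms j, zero_add]
  simp only [Finset.powersetCard_zero, Finset.sum_singleton, Finset.prod_empty, one_mul,
    Finset.sdiff_empty, Finset.prod_const, Finset.card_univ]

end Weight

section ShiftOperator

variable {M M' : Type*} [AddCommMonoid M] [AddCommMonoid M']

/-- The action of the group ring `ℤ[M]` on functions on `M` in which the basis element of `c`
acts as the shift `f ↦ f (· + c)`. -/
noncomputable def shiftOp : AddMonoidAlgebra ℤ M →ₐ[ℤ] Module.End ℤ (M → ℤ) :=
  AddMonoidAlgebra.lift ℤ _ M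
    { toFun c := LinearMap.funLeft ℤ ℤ (· + c.toAdd)
      map_one' := by ext f k; simp [LinearMap.funLeft_apply]
      map_mul' c d := by
        ext f k; simp [LinearMap.funLeft_apply, Module.End.mul_apply, add_assoc] }

lemma shiftOp_single (c : M) (r : ℤ) (f : M → ℤ) (k : M) :
    shiftOp (AddMonoidAlgebra.single c r) f k = r * f (k + c) := by
  simp [shiftOp, LinearMap.funLeft_apply]

lemma shiftOp_mul_apply (P Q : AddMonoidAlgebra ℤ M) (f : M → ℤ) :
    shiftOp (P * Q) f = shiftOp P (shiftOp Q f) := by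
  rw [map_mul, Module.End.mul_apply]

lemma shiftOp_mapDomain (e : M →+ M') (φ : M → M') (hφ : ∀ k c, φ (k + c) = φ k + e c)
    (P : AddMonoidAlgebra ℤ M) (f : M' → ℤ) (k : M) :
    shiftOp (AddMonoidAlgebra.mapDomainRingHom ℤ e P) f (φ k) = shiftOp P (f ∘ φ) k := by
  induction P using AddMonoidAlgebra.induction_linear with
  | zero => simp
  | add P Q hP hQ => simp only [map_add, LinearMap.add_apply, Pi.add_apply, hP, hQ]
  | single c r =>
    simp [AddMonoidAlgebra.mapDomain_single, shiftOp_single, hφ]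

/-- The ideal of all elements of the group ring that kill `f`. -/
noncomputable def shiftAnnihilator (f : M → ℤ) : Ideal (AddMonoidAlgebra ℤ M) where
  carrier := {P | shiftOp P f = 0}
  add_mem' {P Q} hP hQ := by
    simp only [Set.mem_ofPred_eq] at hP hQ ⊢
    rw [map_add, LinearMap.add_apply, hP, hQ, add_zero]
  zero_mem' := by simp
  smul_mem' P Q hQ := by
    simp only [Set.mem_ofPred_eq] at hQ ⊢
    rw [smul_eq_mul, shiftOp_mul_apply, hQ, map_zero]

lemma mk_shiftAnnihilator_eq_iff {f : M → ℤ} {P Q : AddMonoidAlgebra ℤ M} :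
    Ideal.Quotient.mk (shiftAnnihilator f) P = Ideal.Quotient.mk (shiftAnnihilator f) Q ↔
      shiftOp P f = shiftOp Q f := by
  rw [Ideal.Quotient.eq, ← sub_eq_zero (a := shiftOp P f), ← LinearMap.sub_apply, ← map_sub]
  rfl

variable {ι : Type*} [DecidableEq ι]

/-- The shift `E_i` of the `i`-th coordinate. -/
noncomputable def shiftVar (i : ι) : AddMonoidAlgebra ℤ (ι → ℤ) :=
  AddMonoidAlgebra.single (Pi.single i 1) 1

lemma shiftOp_shiftVar (i : ι) (f : (ι → ℤ) → ℤ) (k : ι → ℤ) :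
    shiftOp (shiftVar i) f k = f (k + Pi.single i 1) := by
  rw [shiftVar, shiftOp_single, one_mul]

lemma mapDomainRingHom_shiftVar (e : (ι → ℤ) →+ M) (i : ι) :
    AddMonoidAlgebra.mapDomainRingHom ℤ e (shiftVar i) =
      AddMonoidAlgebra.single (e (Pi.single i 1)) 1 :=
  AddMonoidAlgebra.mapDomain_single

lemma shiftOp_prod_shiftVar_sub_one {N : Type*} [AddCommGroup N]
    (g : MultilinearMap ℤ (fun _ : ι => N) ℤ) (r : ℤ → N) (T : Finset ι) (k : ι → ℤ) :
    shiftOp (∏ i ∈ T, (shiftVar i - 1)) (fun k => g fun i => r (k i)) k =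
      g (T.piecewise (fun i => r (k i + 1) - r (k i)) (fun i => r (k i))) := by
  induction T using Finset.induction_on generalizing k with
  | empty => simp
  | insert a T ha ih =>
    rw [Finset.prod_insert ha, shiftOp_mul_apply, map_sub, LinearMap.sub_apply, Pi.sub_apply,
      shiftOp_shiftVar, map_one, Module.End.one_apply, ih, ih, Finset.piecewise_insert,
      MultilinearMap.map_update_sub]
    congr 2 <;> funext i <;> rcases eq_or_ne i a with rfl | h
    · simp [ha]
    · by_cases i ∈ T <;> simp [*]
    · simp [ha]
    · by_cases i ∈ T <;> simp [*]

end ShiftOperator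

section BinomialDeterminant

open Polynomial in
lemma det_C_add_X_mul_C {R : Type*} [CommRing R] {n : ℕ} (A B : Fin n → Fin n → R) :
    (Matrix.of fun i j => C (A i j) + X * C (B i j)).det =
      ∑ T : Finset (Fin n), C (Matrix.of (T.piecewise B A)).det * X ^ T.card := by
  let A' : Fin n → Fin n → R[X] := fun i j => C (A i j)
  let B' : Fin n → Fin n → R[X] := fun i j => C (B i j)
  have det_piecewise (T : Finset (Fin n)) :
      Matrix.detRowAlternating (T.piecewise (fun i => (X : R[X]) • B' i) A') =
        C (Matrix.of (T.piecewise B A)).det * X ^ T.card := by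
    have pull_out := Matrix.detRowAlternating.toMultilinearMap.map_piecewise_smul
      (fun _ => (X : R[X])) (T.piecewise B' A') T
    rw [Finset.prod_const, smul_eq_mul, mul_comm] at pull_out
    rw [RingHom.map_det]
    convert pull_out using 2
    all_goals
      refine congrArg Matrix.det (funext fun i => ?_)
      by_cases h : i ∈ T <;> ext1 j <;> simp [h, A', B']
  simp only [← det_piecewise]
  refine Eq.trans ?_ (Matrix.detRowAlternating.toMultilinearMap.map_add_univ _ _)
  exact congrArg Matrix.det (funext fun i => funext fun j => add_comm _ _)

open Polynomial in
lemma sum_powersetCard_det_piecewise {R : Type*} [CommRing R] {n : ℕ}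
    (A B : Fin (n + 1) → Fin (n + 1) → R) (hB_zero : ∀ i, B i 0 = 0)
    (hB_succ : ∀ i (j : Fin n), B i j.succ = A i j.castSucc) (j : ℕ) :
    ∑ T ∈ Finset.powersetCard (j + 1) Finset.univ, (Matrix.of (T.piecewise B A)).det = 0 := by
  -- `det (A + X B) = det A` by column operations; compare coefficients of `X ^ (j + 1)`.
  have det_eq : (Matrix.of fun i j => C (A i j) + X * C (B i j)).det = C (Matrix.of A).det := by
    rw [RingHom.map_det]
    refine (Matrix.det_eq_of_forall_col_eq_smul_add_pred (fun _ => -X) ?_ ?_).symm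
    · intro i; simp [hB_zero]
    · intro i j; simp [hB_succ]
  have coeff_eq := congrArg (coeff · (j + 1)) ((det_C_add_X_mul_C A B).symm.trans det_eq)
  simp only [finsetSum_coeff, coeff_C_mul_X_pow, coeff_C_succ, ← Finset.sum_filter] at coeff_eq
  rw [← coeff_eq]
  refine Finset.sum_congr ?_ fun _ _ => rfl
  ext T
  simp [Finset.mem_powersetCard, eq_comm]

/-- The determinant `det (choose (k i) (j + s))` over `0 ≤ i, j < n`. -/
noncomputable def binomDet {n : ℕ} (s : ℕ) (k : Fin n → ℤ) : ℤ :=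
  (Matrix.of fun i j : Fin n => Ring.choose (k i) (j.1 + s)).det

lemma binomDet_comp_perm {n : ℕ} (s : ℕ) (σ : Equiv.Perm (Fin n)) (k : Fin n → ℤ) :
    binomDet s (k ∘ σ) = Equiv.Perm.sign σ * binomDet s k :=
  Matrix.det_permute σ (Matrix.of fun i j : Fin n => Ring.choose (k i) (j.1 + s))

lemma shiftOp_prod_binomDet {n : ℕ} (s : ℕ) (T : Finset (Fin n)) (k : Fin n → ℤ) :
    shiftOp (∏ i ∈ T, (shiftVar i - 1)) (binomDet s) k =
      (Matrix.of (T.piecewise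
        (fun i j => Ring.choose (k i + 1) (j.1 + s) - Ring.choose (k i) (j.1 + s))
        (fun i j => Ring.choose (k i) (j.1 + s)))).det :=
  shiftOp_prod_shiftVar_sub_one (Matrix.detRowAlternating (n := Fin n) (R := ℤ)).toMultilinearMap
    (fun a j => Ring.choose a (j.1 + s)) T k

lemma shiftOp_prod_binomDet_succ {n : ℕ} (s : ℕ) :
    shiftOp (∏ i, (shiftVar i - 1)) (binomDet (n := n) (s + 1)) = binomDet s := by
  funext k
  rw [shiftOp_prod_binomDet, Finset.piecewise_univ, binomDet]
  simp only [← add_assoc, Ring.choose_succ_succ, add_sub_cancel_right]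

lemma shiftOp_esymm_binomDet {n : ℕ} (j : ℕ) :
    shiftOp (∑ T ∈ Finset.powersetCard (j + 1) Finset.univ, ∏ i ∈ T, (shiftVar i - 1))
      (binomDet (n := n) 0) = 0 := by
  funext k
  rw [map_sum, LinearMap.sum_apply, Finset.sum_apply]
  simp only [shiftOp_prod_binomDet]
  cases n with
  | zero => simp
  | succ n =>
    refine sum_powersetCard_det_piecewise _ _ (fun i => ?_) (fun i j => ?_) j
    · simp
    · simp [Ring.choose_succ_succ]

lemma binomDet_succ {n : ℕ} (k : Fin (n + 1) → ℤ) :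
    binomDet 0 k = ∑ m : Fin (n + 1), (-1) ^ m.1 * binomDet 1 (m.removeNth k) := by
  rw [binomDet, Matrix.det_succ_column_zero]
  refine Finset.sum_congr rfl fun m _ => ?_
  simp only [Matrix.of_apply, Fin.val_zero, add_zero, Ring.choose_zero_right, mul_one]
  rfl

lemma prod_factorial_mul_binomDet {n : ℕ} (k : Fin n → ℤ) :
    (∏ j : Fin n, (j.1.factorial : ℤ)) * binomDet 0 k = pairProd (fun p q => k q - k p) := by
  rw [pairProd, ← Matrix.det_vandermonde,
    Matrix.det_eval_matrixOfPolynomials_eq_det_vandermonde k (fun j => descPochhammer ℤ j.1)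
      (fun i => descPochhammer_natDegree ℤ i.1) (fun i => monic_descPochhammer ℤ i.1),
    binomDet, ← Matrix.det_mul_row]
  congr 1
  ext i j
  simp only [Matrix.of_apply, add_zero]
  rw [← nsmul_eq_mul, ← Ring.descPochhammer_eq_factorial_smul_choose, Polynomial.eval_eq_smeval]

lemma binomDet_eq_of_pairProd_eq {n : ℕ} {k l : Fin n → ℤ}
    (h : pairProd (fun p q => k q - k p) = pairProd (fun p q => l q - l p)) :
    binomDet 0 k = binomDet 0 l := by
  have factorial_ne_zero : ∏ j : Fin n, (j.1.factorial : ℤ) ≠ 0 :=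
    Finset.prod_ne_zero_iff.mpr fun j _ => mod_cast Nat.factorial_ne_zero j.1
  refine mul_left_cancel₀ factorial_ne_zero ?_
  rw [prod_factorial_mul_binomDet, prod_factorial_mul_binomDet, h]

lemma binomDet_add_const {n : ℕ} (k : Fin n → ℤ) (c : ℤ) :
    binomDet 0 (k + Function.const _ c) = binomDet 0 k :=
  binomDet_eq_of_pairProd_eq <| by
    simp only [Pi.add_apply, Function.const_apply, add_sub_add_right_eq_sub]

lemma binomDet_neg_comp_rev {n : ℕ} (k : Fin n → ℤ) :
    binomDet 0 (-(k ∘ Fin.rev)) = binomDet 0 k :=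
  binomDet_eq_of_pairProd_eq <| by
    rw [← pairProd_rev fun p q => k p - k q]
    simp only [Pi.neg_apply, Function.comp_apply, neg_sub_neg]

end BinomialDeterminant

section OperatorFormula

variable {n : ℕ}

/-- Fischer's operator `∏_{p < q} (1 - E_p + E_p E_q)` applied to `det (choose (k i) (j + s))`.
For `s = 0` it counts monotone triangles with bottom row `k`; for `s = 1` it is a discrete
antiderivative of the case `s = 0` in all variables. -/
noncomputable def operatorFormula (s : ℕ) : (Fin n → ℤ) → ℤ :=
  shiftOp (weightProd shiftVar) (binomDet s)

/-- Precomposition with a permutation of the coordinates, as an additive map. -/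
def permCoords (σ : Equiv.Perm (Fin n)) : (Fin n → ℤ) →+ (Fin n → ℤ) where
  toFun k := k ∘ σ
  map_zero' := rfl
  map_add' _ _ := rfl

lemma mapDomainRingHom_permCoords_shiftVar (σ : Equiv.Perm (Fin n)) (i : Fin n) :
    AddMonoidAlgebra.mapDomainRingHom ℤ (permCoords σ) (shiftVar (σ i)) = shiftVar i := by
  rw [mapDomainRingHom_shiftVar, shiftVar]
  congr 1
  funext j
  simp [permCoords, Pi.single_apply]

lemma shiftOp_binomDet_permCoords (s : ℕ) (σ : Equiv.Perm (Fin n))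
    (P : AddMonoidAlgebra ℤ (Fin n → ℤ)) (k : Fin n → ℤ) :
    shiftOp (AddMonoidAlgebra.mapDomainRingHom ℤ (permCoords σ) P) (binomDet s) (k ∘ σ) =
      Equiv.Perm.sign σ * shiftOp P (binomDet s) k := by
  have antisymmetric :
      binomDet s ∘ permCoords σ = (Equiv.Perm.sign σ : ℤ) • (binomDet s : (Fin n → ℤ) → ℤ) :=
    funext (binomDet_comp_perm s σ)
  refine (shiftOp_mapDomain (permCoords σ) (permCoords σ) (map_add _) P (binomDet s) k).trans ?_
  rw [antisymmetric, map_smul, Pi.smul_apply, smul_eq_mul]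

lemma prod_mk_shiftVar_sub_one_mul_add
    (a b : AddMonoidAlgebra ℤ (Fin n → ℤ) ⧸ shiftAnnihilator (binomDet (n := n) 0)) :
    ∏ i, (b * (Ideal.Quotient.mk _ (shiftVar i) - 1) + a) = a ^ n := by
  refine (prod_mul_add_eq_pow_of_sum_powersetCard (fun j => ?_) a b).trans ?_
  · simp only [← map_one (Ideal.Quotient.mk (shiftAnnihilator (binomDet (n := n) 0))), ← map_sub,
      ← map_prod, ← map_sum]
    exact Ideal.Quotient.eq_zero_iff_mem.mpr (shiftOp_esymm_binomDet j)
  · rw [Fintype.card_fin]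

lemma operatorFormula_comp_finRotate {m : ℕ} (k : Fin (m + 1) → ℤ) :
    operatorFormula 0 (k ∘ finRotate (m + 1)) =
      (-1) ^ m * operatorFormula 0 (k + Pi.single 0 (m + 1 : ℤ)) := by
  have map_weights : AddMonoidAlgebra.mapDomainRingHom ℤ (permCoords (finRotate (m + 1)))
      (weightProd (shiftVar ∘ finRotate (m + 1))) = weightProd shiftVar := by
    simp only [map_weightProd, Function.comp_apply, mapDomainRingHom_permCoords_shiftVar]
  have rotate_weights : shiftOp (weightProd (shiftVar ∘ finRotate (m + 1))) (binomDet 0) =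
      shiftOp (shiftVar 0 ^ (m + 1) * weightProd shiftVar) (binomDet 0) := by
    rw [← mk_shiftAnnihilator_eq_iff, map_mul, map_pow, map_weightProd, map_weightProd]
    exact weightProd_comp_finRotate (x := fun i => Ideal.Quotient.mk _ (shiftVar i))
      prod_mk_shiftVar_sub_one_mul_add
  conv_lhs => rw [operatorFormula, ← map_weights]
  rw [shiftOp_binomDet_permCoords, rotate_weights, shiftOp_mul_apply, shiftVar,
    AddMonoidAlgebra.single_pow, one_pow, shiftOp_single, sign_finRotate, ← Pi.single_smul]
  simp [operatorFormula]

lemma operatorFormula_neg_comp_rev (k : Fin n → ℤ) :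
    operatorFormula 0 (-(k ∘ Fin.rev)) = operatorFormula 0 k := by
  let inverseShift (i : Fin n) : AddMonoidAlgebra ℤ (Fin n → ℤ) :=
    AddMonoidAlgebra.single (-Pi.single i 1) 1
  let reflect : (Fin n → ℤ) →+ (Fin n → ℤ) := -permCoords Fin.revPerm
  have map_weights : AddMonoidAlgebra.mapDomainRingHom ℤ reflect
      (weightProd fun i => inverseShift i.rev) = weightProd shiftVar := by
    rw [map_weightProd]
    congr 1
    funext i
    refine AddMonoidAlgebra.mapDomain_single.trans ?_
    rw [shiftVar]
    congr 1
    funext j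
    simp [reflect, permCoords, Pi.single_apply]
  have reflect_weights : shiftOp (weightProd fun i => inverseShift i.rev) (binomDet 0) =
      shiftOp (weightProd shiftVar) (binomDet 0) := by
    rw [← mk_shiftAnnihilator_eq_iff, map_weightProd, map_weightProd]
    refine weightProd_rev (y := fun i => Ideal.Quotient.mk _ (inverseShift i)) (fun i => ?_) ?_
    · rw [← map_mul, shiftVar, AddMonoidAlgebra.single_mul_single, add_neg_cancel, one_mul]
      exact map_one _
    · simpa using prod_mk_shiftVar_sub_one_mul_add (n := n) 1 1
  have reflect_binomDet : binomDet 0 ∘ reflect = binomDet (n := n) 0 :=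
    funext binomDet_neg_comp_rev
  rw [operatorFormula, ← map_weights]
  refine (shiftOp_mapDomain reflect reflect (map_add _) _ _ k).trans ?_
  rw [reflect_binomDet, reflect_weights, map_weights]

lemma operatorFormula_add_const (k : Fin n → ℤ) (c : ℤ) :
    operatorFormula 0 (k + Function.const _ c) = operatorFormula 0 k := by
  have naturality := shiftOp_mapDomain (AddMonoidHom.id _) (· + Function.const (Fin n) c)
    (fun k d => add_right_comm k d _) (weightProd shiftVar) (binomDet 0) k
  rw [AddMonoidAlgebra.mapDomainRingHom_id] at naturality
  refine naturality.trans (congrFun (congrArg _ ?_) k)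
  exact funext fun k => binomDet_add_const k c

lemma operatorFormula_reflect (m : ℕ) (x : ℤ) :
    operatorFormula 0 (Fin.cons (2 * m + 4 - x) fun i : Fin m => (i.1 + 2 : ℤ)) =
      (-1) ^ m * operatorFormula 0 (Fin.cons x fun i : Fin m => (i.1 + 2 : ℤ)) := by
  let k : Fin (m + 1) → ℤ := Fin.cons (-x) fun i : Fin m => i.1 - (m + 1)
  have neg_rev_rotate :
      -((k ∘ finRotate (m + 1)) ∘ Fin.rev) = Fin.cons x fun i : Fin m => (i.1 + 2 : ℤ) := by
    funext i
    refine Fin.cases ?_ (fun i => ?_) i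
    · simp [k]
    · have rotate_rev : finRotate (m + 1) i.succ.rev = i.rev.succ := by
        rw [Fin.rev_succ, finRotate_apply, Fin.coeSucc_eq_succ]
      simp [k, rotate_rev, Fin.val_rev]
      omega
  have translate : k + Pi.single 0 (m + 1 : ℤ) + Function.const _ (m + 3 : ℤ) =
      Fin.cons (2 * m + 4 - x) fun i : Fin m => (i.1 + 2 : ℤ) := by
    funext i
    refine Fin.cases ?_ (fun i => ?_) i
    · simp only [Pi.add_apply, Fin.cons_zero, Pi.single_eq_same, Function.const_apply, k]
      ring
    · simp only [Pi.add_apply, Fin.cons_succ, Pi.single_eq_of_ne (Fin.succ_ne_zero i),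
        Function.const_apply, k]
      ring
  rw [← neg_rev_rotate, operatorFormula_neg_comp_rev, operatorFormula_comp_finRotate, ← translate,
    operatorFormula_add_const, ← mul_assoc, ← mul_pow, neg_one_mul, neg_neg, one_pow, one_mul]

end OperatorFormula

section DeletionSum

variable {n : ℕ}

/-- Annihilation by `1 - E_j + E_i E_j`, for adjacent `i < j`, at the points with equal `i`-th and
`j`-th coordinates. -/
def AdjacentCancellation (G : (Fin n → ℤ) → ℤ) : Prop :=
  ∀ i j : Fin n, i.1 + 1 = j.1 → ∀ l : Fin n → ℤ, l i = l j →
    G l + G (l + Pi.single i 1 + Pi.single j 1) = G (l + Pi.single j 1)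

lemma adjacentCancellation_operatorFormula (s : ℕ) :
    AdjacentCancellation (operatorFormula (n := n) s) := by
  intro i j hij l hl
  let P : AddMonoidAlgebra ℤ (Fin n → ℤ) := weight (shiftVar j) (shiftVar i) * weightProd shiftVar
  have hne : i ≠ j := fun h => by omega
  have map_P :
      AddMonoidAlgebra.mapDomainRingHom ℤ (permCoords (Equiv.swap i j)) P = P := by
    have map_shiftVar (q : Fin n) : AddMonoidAlgebra.mapDomainRingHom ℤ
        (permCoords (Equiv.swap i j)) (shiftVar q) = shiftVar (Equiv.swap i j q) := by
      conv_lhs => rw [← Equiv.swap_apply_self i j q, mapDomainRingHom_permCoords_shiftVar]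
    simp only [P, weight, map_mul, map_add, map_sub, map_one, map_weightProd, map_shiftVar,
      Equiv.swap_apply_left, Equiv.swap_apply_right]
    rw [mul_comm, ← mul_comm (weightProd _)]
    exact weightProd_comp_swap shiftVar hij
  have swap_l : l ∘ Equiv.swap i j = l := by
    rw [Equiv.comp_swap_eq_update, hl, Function.update_eq_self, ← hl, Function.update_eq_self]
  have vanish : shiftOp P (binomDet s) l = 0 := by
    have antisymmetric := shiftOp_binomDet_permCoords s (Equiv.swap i j) P l
    rw [map_P, swap_l, Equiv.Perm.sign_swap hne] at antisymmetric
    push_cast at antisymmetric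
    linarith
  have expand : shiftOp P (binomDet s) l = operatorFormula s l -
      operatorFormula s (l + Pi.single j 1) +
        operatorFormula s (l + Pi.single i 1 + Pi.single j 1) := by
    rw [shiftOp_mul_apply, weight, map_add, map_sub, map_mul, map_one]
    simp only [LinearMap.add_apply, LinearMap.sub_apply, Pi.add_apply, Pi.sub_apply,
      Module.End.one_apply, Module.End.mul_apply, shiftOp_shiftVar, operatorFormula]
    rw [add_right_comm]
  linarith

lemma shiftOp_prod_operatorFormula_one :
    shiftOp (∏ i, (shiftVar i - 1)) (operatorFormula (n := n) 1) = operatorFormula 0 := by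
  rw [operatorFormula, ← shiftOp_mul_apply, mul_comm, shiftOp_mul_apply,
    shiftOp_prod_binomDet_succ 0, operatorFormula]

/-- The signed sum of the values of `G` at the points obtained from `k` by deleting one coordinate
and adding `1` to all coordinates after it. -/
def deletionSum (G : (Fin n → ℤ) → ℤ) (k : Fin (n + 1) → ℤ) : ℤ :=
  ∑ m : Fin (n + 1), (-1) ^ m.1 *
    G (m.removeNth k + fun i => if i.castSucc < m then 0 else 1)

/-- Deletion of the `m`-th coordinate, as an additive map. -/
def removeNthHom (m : Fin (n + 1)) : (Fin (n + 1) → ℤ) →+ (Fin n → ℤ) where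
  toFun := m.removeNth
  map_zero' := rfl
  map_add' _ _ := rfl

lemma mapDomainRingHom_removeNthHom_weightProd (m : Fin (n + 1)) :
    AddMonoidAlgebra.mapDomainRingHom ℤ (removeNthHom m) (weightProd shiftVar) =
      AddMonoidAlgebra.single (fun i => if i.castSucc < m then 0 else 1) 1 *
        weightProd shiftVar := by
  let y (i : Fin (n + 1)) : AddMonoidAlgebra ℤ (Fin n → ℤ) :=
    AddMonoidAlgebra.mapDomainRingHom ℤ (removeNthHom m) (shiftVar i)
  have map_deleted : y m = 1 := by
    simp only [y, mapDomainRingHom_shiftVar]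
    rw [AddMonoidAlgebra.one_def]
    congr 1
    funext q
    exact Pi.single_eq_of_ne (m.succAbove_ne q) 1
  have map_kept (q : Fin n) : y (m.succAbove q) = shiftVar q := by
    simp only [y, mapDomainRingHom_shiftVar]
    rw [shiftVar]
    congr 1
    funext r
    change Pi.single (M := fun _ => ℤ) (m.succAbove q) 1 (m.succAbove r) = _
    simp [Pi.single_apply]
  rw [map_weightProd]
  refine (weightProd_eq_of_apply_eq_one y map_deleted).trans ?_
  congr 1
  · have factor (q : Fin n) : (if q.castSucc < m then 1 else y (m.succAbove q)) =
        AddMonoidAlgebra.single (Pi.single q (if q.castSucc < m then 0 else 1)) 1 := by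
      split_ifs
      · rw [Pi.single_zero, AddMonoidAlgebra.one_def]
      · rw [map_kept, shiftVar]
    simp only [factor, AddMonoidAlgebra.prod_single, Finset.prod_const_one]
    congr 1
    exact Finset.univ_sum_single fun q : Fin n => if q.castSucc < m then (0 : ℤ) else 1
  · exact congrArg weightProd (funext map_kept)

lemma operatorFormula_eq_deletionSum (k : Fin (n + 1) → ℤ) :
    operatorFormula 0 k = deletionSum (operatorFormula 1) k := by
  have expand : (binomDet 0 : (Fin (n + 1) → ℤ) → ℤ) =
      ∑ m : Fin (n + 1), (-1 : ℤ) ^ m.1 • (binomDet 1 ∘ removeNthHom m) := by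
    funext k
    simp only [binomDet_succ, Finset.sum_apply, Pi.smul_apply, smul_eq_mul]
    rfl
  rw [operatorFormula, expand, map_sum, Finset.sum_apply, deletionSum]
  refine Finset.sum_congr rfl fun m _ => ?_
  rw [map_smul, Pi.smul_apply, smul_eq_mul,
    ← shiftOp_mapDomain (removeNthHom m) (removeNthHom m) (map_add _),
    mapDomainRingHom_removeNthHom_weightProd, shiftOp_mul_apply, shiftOp_single, one_mul]
  rfl

end DeletionSum

section StrictInterlacing

variable {n : ℕ}

open Classical in
/-- The possible next-to-last rows of a monotone triangle with bottom row `k`. -/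
noncomputable def strictInterlacing (k : Fin (n + 1) → ℤ) : Finset (Fin n → ℤ) :=
  {l ∈ Finset.Icc (Fin.init k) (Fin.tail k) | StrictMono l}

lemma mem_strictInterlacing {k : Fin (n + 1) → ℤ} {l : Fin n → ℤ} :
    l ∈ strictInterlacing k ↔ (Fin.init k ≤ l ∧ l ≤ Fin.tail k) ∧ StrictMono l := by
  rw [strictInterlacing, Finset.mem_filter, Finset.mem_Icc]

lemma strictInterlacing_fin_one (k : Fin 1 → ℤ) : strictInterlacing k = {0} := by
  ext l
  simp [mem_strictInterlacing, eq_iff_true_of_subsingleton, Subsingleton.strictMono]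

lemma cons_mem_strictInterlacing {a k₀ k₁ : ℤ} {k l : Fin n → ℤ} :
    (Fin.cons a l : Fin (n + 1) → ℤ) ∈ strictInterlacing (Fin.cons k₀ (Fin.cons k₁ k)) ↔
      a ∈ Finset.Icc k₀ k₁ ∧ l ∈ strictInterlacing (Fin.cons (max k₁ (a + 1)) k) := by
  have init_cons : Fin.init (Fin.cons k₀ (Fin.cons k₁ k) : Fin (n + 2) → ℤ) =
      Fin.cons k₀ (Fin.init (Fin.cons k₁ k : Fin (n + 1) → ℤ)) :=
    (Fin.cons_self_tail _).symm
  have lower_bound : Fin.init (Fin.cons k₁ k : Fin (n + 1) → ℤ) ≤ l ∧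
        ((∀ i, a < l i) ∧ StrictMono l) ↔
      Fin.init (Fin.cons (max k₁ (a + 1)) k : Fin (n + 1) → ℤ) ≤ l ∧ StrictMono l := by
    cases n with
    | zero => simp
    | succ n =>
      have first_lt (hl : StrictMono l) : (∀ i, a < l i) ↔ a < l 0 :=
        ⟨fun h => h 0, fun h i => h.trans_le (hl.monotone (Fin.zero_le i))⟩
      rw [← and_assoc]
      refine and_congr_left fun hl => ?_
      simp only [first_lt hl, Pi.le_def, Fin.init, Fin.forall_fin_succ, Fin.castSucc_zero,
        Fin.cons_zero, ← Fin.succ_castSucc, Fin.cons_succ, max_le_iff, Int.add_one_le_iff]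
      tauto
  simp only [mem_strictInterlacing, Fin.strictMono_cons, init_cons, Fin.tail_cons,
    Fin.cons_le_cons, Finset.mem_Icc]
  tauto

lemma sum_strictInterlacing_cons_cons {M : Type*} [AddCommMonoid M] (f : (Fin (n + 1) → ℤ) → M)
    (k₀ k₁ : ℤ) (k : Fin n → ℤ) :
    ∑ l ∈ strictInterlacing (Fin.cons k₀ (Fin.cons k₁ k)), f l =
      ∑ a ∈ Finset.Icc k₀ k₁, ∑ l ∈ strictInterlacing (Fin.cons (max k₁ (a + 1)) k),
        f (Fin.cons a l) := by
  rw [Finset.sum_sigma']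
  refine Finset.sum_nbij' (fun l => ⟨l 0, Fin.tail l⟩) (fun p => Fin.cons p.1 p.2)
    (fun l hl => ?_) (fun p hp => ?_) (fun l _ => Fin.cons_self_tail l) (fun p _ => ?_)
    (fun l _ => by rw [Fin.cons_self_tail])
  · rw [Finset.mem_sigma, ← cons_mem_strictInterlacing, Fin.cons_self_tail]
    exact hl
  · rw [cons_mem_strictInterlacing]
    exact Finset.mem_sigma.mp hp
  · simp

lemma sum_strictInterlacing_cons_cons_of_le {M : Type*} [AddCommMonoid M]
    (f : (Fin (n + 1) → ℤ) → M) {k₀ k₁ : ℤ} (h : k₀ ≤ k₁) (k : Fin n → ℤ) :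
    ∑ l ∈ strictInterlacing (Fin.cons k₀ (Fin.cons k₁ k)), f l =
      ∑ a ∈ Finset.Ico k₀ k₁, ∑ l ∈ strictInterlacing (Fin.cons k₁ k), f (Fin.cons a l) +
        ∑ l ∈ strictInterlacing (Fin.cons (k₁ + 1) k), f (Fin.cons k₁ l) := by
  rw [sum_strictInterlacing_cons_cons, ← Finset.Ico_add_one_right_eq_Icc,
    ← Finset.sum_Ico_add_eq_sum_Ico_add_one h, max_eq_right (Int.le_add_one le_rfl)]
  refine congrArg (· + _) (Finset.sum_congr rfl fun a ha => ?_)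
  rw [max_eq_left (Int.add_one_le_iff.mpr (Finset.mem_Ico.mp ha).2)]

lemma sum_strictInterlacing_cons_of_lt {M : Type*} [AddCommMonoid M] (f : (Fin (n + 1) → ℤ) → M)
    {k₀ : ℤ} {k : Fin (n + 1) → ℤ} (h : k₀ < k 0) :
    ∑ l ∈ strictInterlacing (Fin.cons k₀ k), f l =
      ∑ l ∈ strictInterlacing k, f (Fin.cons k₀ l) +
        ∑ l ∈ strictInterlacing (Fin.cons (k₀ + 1) k), f l := by
  obtain ⟨k₁, k, rfl⟩ : ∃ k₁ k', k = Fin.cons k₁ k' := ⟨_, _, (Fin.cons_self_tail k).symm⟩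
  rw [Fin.cons_zero] at h
  rw [sum_strictInterlacing_cons_cons_of_le f h.le, ← Finset.insert_Ico_add_one_left_eq_Ico h,
    Finset.sum_insert (by simp),
    sum_strictInterlacing_cons_cons_of_le f (Int.add_one_le_iff.mpr h), add_assoc]

end StrictInterlacing

section SummationOverInterlacingRows

variable {n : ℕ}

lemma sum_Ico_int_sub_of_le {a b : ℤ} (h : a ≤ b) (f : ℤ → ℤ) :
    ∑ x ∈ Finset.Ico a b, (f (x + 1) - f x) = f b - f a := by
  induction b, h using Int.leInduction with
  | base => simp
  | succ b hb ih =>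
    rw [← Finset.sum_Ico_add_eq_sum_Ico_add_one hb, ih]
    ring

lemma cons_add_cons (a b : ℤ) (k l : Fin n → ℤ) :
    (Fin.cons a k + Fin.cons b l : Fin (n + 1) → ℤ) = Fin.cons (a + b) (k + l) :=
  Matrix.cons_add_cons a k b l

lemma cons_zero_zero : (Fin.cons 0 0 : Fin (n + 1) → ℤ) = 0 :=
  Matrix.cons_zero_zero

lemma single_zero_eq_cons : (Pi.single 0 1 : Fin (n + 1) → ℤ) = Fin.cons 1 0 := by
  funext i
  refine Fin.cases rfl (fun i => ?_) i
  simp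

lemma single_succ_eq_cons (i : Fin n) :
    (Pi.single i.succ 1 : Fin (n + 1) → ℤ) = Fin.cons 0 (Pi.single i 1) := by
  funext j
  refine Fin.cases (by simp) (fun j => ?_) j
  simp [Pi.single_apply]

lemma deletionSum_fin_zero (G : (Fin 0 → ℤ) → ℤ) (k : Fin 1 → ℤ) : deletionSum G k = G 0 := by
  simp [deletionSum]

lemma deletionSum_sub (G G' : (Fin n → ℤ) → ℤ) (k : Fin (n + 1) → ℤ) :
    deletionSum (G - G') k = deletionSum G k - deletionSum G' k := by
  simp only [deletionSum, Pi.sub_apply, mul_sub, Finset.sum_sub_distrib]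

lemma deletionSum_cons (G : (Fin (n + 1) → ℤ) → ℤ) (a : ℤ) (k : Fin (n + 1) → ℤ) :
    deletionSum G (Fin.cons a k) = G (k + 1) - deletionSum (fun l => G (Fin.cons a l)) k := by
  rw [deletionSum, Fin.sum_univ_succ, deletionSum, sub_eq_add_neg, ← Finset.sum_neg_distrib]
  congr 1
  · simp only [Fin.val_zero, pow_zero, one_mul, Fin.removeNth_zero, Fin.tail_cons, Fin.not_lt_zero,
      if_false]
    rfl
  · refine Finset.sum_congr rfl fun m _ => ?_
    rw [Fin.val_succ, pow_succ, mul_neg_one, neg_mul]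
    congr 3
    funext i
    refine Fin.cases ?_ (fun i => ?_) i
    · simp [Fin.removeNth]
    · simp [Fin.removeNth, Fin.castSucc_lt_iff_succ_le]

lemma AdjacentCancellation.cons {G : (Fin (n + 1) → ℤ) → ℤ} (hG : AdjacentCancellation G) (a : ℤ) :
    AdjacentCancellation fun l => G (Fin.cons a l) := by
  intro i j hij l hl
  have cancel := hG i.succ j.succ (by simp [hij]) (Fin.cons a l) (by simpa using hl)
  simpa only [single_succ_eq_cons, cons_add_cons, add_zero] using cancel

lemma AdjacentCancellation.sub {G G' : (Fin n → ℤ) → ℤ} (hG : AdjacentCancellation G)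
    (hG' : AdjacentCancellation G') : AdjacentCancellation (G - G') := by
  intro i j hij l hl
  simp only [Pi.sub_apply]
  linarith [hG i j hij l hl, hG' i j hij l hl]

lemma AdjacentCancellation.deletionSum_cons_add {G : (Fin (n + 1) → ℤ) → ℤ}
    (hG : AdjacentCancellation G) (a : ℤ) (k : Fin n → ℤ) :
    deletionSum (fun l => G (Fin.cons a l)) (Fin.cons a k) +
        deletionSum (fun l => G (Fin.cons (a + 1) l)) (Fin.cons (a + 1) k) =
      deletionSum (fun l => G (Fin.cons a l)) (Fin.cons (a + 1) k) +
        G (Fin.cons (a + 1) (k + 1)) := by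
  cases n with
  | zero => simp only [deletionSum_fin_zero, Subsingleton.elim (k + 1) 0]
  | succ n =>
    have cancel (l : Fin n → ℤ) : G (Fin.cons a (Fin.cons a l)) +
        G (Fin.cons (a + 1) (Fin.cons (a + 1) l)) = G (Fin.cons a (Fin.cons (a + 1) l)) := by
      have cancel := hG 0 (Fin.succ 0) rfl (Fin.cons a (Fin.cons a l)) rfl
      simpa only [single_zero_eq_cons, single_succ_eq_cons, cons_add_cons, add_zero] using cancel
    have sum_cancel : deletionSum (fun l => G (Fin.cons a (Fin.cons a l))) k +
        deletionSum (fun l => G (Fin.cons (a + 1) (Fin.cons (a + 1) l))) k =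
          deletionSum (fun l => G (Fin.cons a (Fin.cons (a + 1) l))) k := by
      simp only [deletionSum, ← Finset.sum_add_distrib, ← mul_add, cancel]
    simp only [deletionSum_cons]
    linarith

lemma shiftOp_prod_shiftVar_sub_one_cons (G : (Fin (n + 1) → ℤ) → ℤ) (a : ℤ) (l : Fin n → ℤ) :
    shiftOp (∏ i, (shiftVar i - 1)) G (Fin.cons a l) =
      shiftOp (∏ i, (shiftVar i - 1))
        ((fun l => G (Fin.cons (a + 1) l)) - fun l => G (Fin.cons a l)) l := by
  let consZero : (Fin n → ℤ) →+ (Fin (n + 1) → ℤ) :=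
    { toFun l := Fin.cons 0 l
      map_zero' := cons_zero_zero
      map_add' k l := by rw [cons_add_cons, add_zero] }
  have map_shiftVar (i : Fin n) :
      AddMonoidAlgebra.mapDomainRingHom ℤ consZero (shiftVar i) = shiftVar i.succ := by
    rw [mapDomainRingHom_shiftVar, shiftVar, single_succ_eq_cons]
    rfl
  have map_differences : AddMonoidAlgebra.mapDomainRingHom ℤ consZero (∏ i, (shiftVar i - 1)) =
      ∏ i : Fin n, (shiftVar i.succ - 1) := by
    simp only [map_prod, map_sub, map_one, map_shiftVar]
  have cons_add (k c : Fin n → ℤ) :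
      (Fin.cons a (k + c) : Fin (n + 1) → ℤ) = Fin.cons a k + consZero c := by
    refine Eq.trans ?_ (cons_add_cons a 0 k c).symm
    rw [add_zero]
  have first_difference : shiftOp (shiftVar 0 - 1) G ∘ (fun l => Fin.cons a l) =
      (fun l => G (Fin.cons (a + 1) l)) - fun l => G (Fin.cons a l) := by
    funext l
    simp [shiftOp_shiftVar, single_zero_eq_cons, cons_add_cons]
  rw [Fin.prod_univ_succ, mul_comm, shiftOp_mul_apply, ← map_differences, ← first_difference]
  exact shiftOp_mapDomain consZero (fun l => Fin.cons a l) cons_add _ _ l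

-- Summing over the first coordinate telescopes; the correction at `l 0 = k 0`, where the second
-- coordinate is forced past `k 0`, is removed by the cancellation for `G`.
lemma AdjacentCancellation.sum_strictInterlacing {G : (Fin n → ℤ) → ℤ}
    (hG : AdjacentCancellation G) {k₀ : ℤ} {k : Fin n → ℤ} (hk : StrictMono k)
    (hk₀ : ∀ i, k₀ ≤ k i) :
    ∑ l ∈ strictInterlacing (Fin.cons k₀ k), shiftOp (∏ i, (shiftVar i - 1)) G l =
      deletionSum G (Fin.cons k₀ k) := by
  induction n generalizing k₀ with
  | zero =>
    simp [strictInterlacing_fin_one, deletionSum_fin_zero]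
  | succ n ih =>
    obtain ⟨k₁, k, rfl⟩ : ∃ k₁ k', k = Fin.cons k₁ k' := ⟨_, _, (Fin.cons_self_tail k).symm⟩
    obtain ⟨hk₁, hk⟩ := Fin.strictMono_cons.mp hk
    have hk₀₁ : k₀ ≤ k₁ := hk₀ 0
    let D (a b : ℤ) : ℤ := deletionSum (fun l => G (Fin.cons a l)) (Fin.cons b k)
    have inner_sum (a b : ℤ) (hb : ∀ i, b ≤ k i) :
        ∑ l ∈ strictInterlacing (Fin.cons b k),
          shiftOp (∏ i, (shiftVar i - 1)) G (Fin.cons a l) = D (a + 1) b - D a b := by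
      simp only [shiftOp_prod_shiftVar_sub_one_cons]
      rw [ih ((hG.cons (a + 1)).sub (hG.cons a)) hk hb, deletionSum_sub]
    have corner := hG.deletionSum_cons_add k₁ k
    have cons_add_one : (Fin.cons k₁ k + 1 : Fin (n + 1) → ℤ) = Fin.cons (k₁ + 1) (k + 1) := by
      funext i
      refine Fin.cases ?_ (fun i => ?_) i <;> simp
    calc ∑ l ∈ strictInterlacing (Fin.cons k₀ (Fin.cons k₁ k)),
          shiftOp (∏ i, (shiftVar i - 1)) G l
        = ∑ a ∈ Finset.Ico k₀ k₁, (D (a + 1) k₁ - D a k₁) +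
            (D (k₁ + 1) (k₁ + 1) - D k₁ (k₁ + 1)) := by
          rw [sum_strictInterlacing_cons_cons_of_le _ hk₀₁, inner_sum k₁ (k₁ + 1) hk₁]
          simp only [inner_sum _ k₁ fun i => (hk₁ i).le]
      _ = D k₁ k₁ - D k₀ k₁ + (D (k₁ + 1) (k₁ + 1) - D k₁ (k₁ + 1)) := by
          rw [sum_Ico_int_sub_of_le hk₀₁ fun a => D a k₁]
      _ = deletionSum G (Fin.cons k₀ (Fin.cons k₁ k)) := by
          rw [deletionSum_cons, cons_add_one]
          linarith

variable {k₀ : ℤ} {k : Fin n → ℤ}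

lemma sum_strictInterlacing_operatorFormula (hk : StrictMono k) (hk₀ : ∀ i, k₀ ≤ k i) :
    ∑ l ∈ strictInterlacing (Fin.cons k₀ k), operatorFormula 0 l =
      operatorFormula 0 (Fin.cons k₀ k) := by
  rw [operatorFormula_eq_deletionSum,
    ← (adjacentCancellation_operatorFormula 1).sum_strictInterlacing hk hk₀,
    shiftOp_prod_operatorFormula_one]

lemma sum_strictInterlacing_operatorFormula_cons (hk : StrictMono k) (hk₀ : ∀ i, k₀ ≤ k i)
    (y : ℤ) :
    ∑ l ∈ strictInterlacing (Fin.cons k₀ k), operatorFormula 0 (Fin.cons y l) =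
      -fwdDiff 1 (fun x => operatorFormula 0 (Fin.cons x (Fin.cons k₀ k))) y := by
  have cancellation (a : ℤ) := (adjacentCancellation_operatorFormula (n := n + 1) 1).cons a
  rw [← shiftOp_prod_operatorFormula_one]
  simp only [shiftOp_prod_shiftVar_sub_one_cons]
  rw [((cancellation (y + 1)).sub (cancellation y)).sum_strictInterlacing hk hk₀, deletionSum_sub,
    fwdDiff, operatorFormula_eq_deletionSum, operatorFormula_eq_deletionSum, deletionSum_cons,
    deletionSum_cons]
  ring

end SummationOverInterlacingRows

section Counting

variable {n : ℕ}

lemma isGT_iff {a : ∀ r : Fin (n + 1), Fin (r.1 + 1) → ℤ} :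
    IsGT a ↔ ∀ r : Fin n,
      Fin.init (a r.succ) ≤ a r.castSucc ∧ a r.castSucc ≤ Fin.tail (a r.succ) := by
  refine ⟨fun h r => ⟨fun j => ?_, fun j => ?_⟩, fun h r hr j => ?_⟩
  · exact (h r.castSucc (Nat.succ_lt_succ r.2) j).1
  · exact (h r.castSucc (Nat.succ_lt_succ r.2) j).2
  · exact ⟨(h ⟨r.1, Nat.lt_of_succ_lt_succ hr⟩).1 j, (h ⟨r.1, Nat.lt_of_succ_lt_succ hr⟩).2 j⟩

lemma isGT_succ_iff {a : ∀ r : Fin (n + 2), Fin (r.1 + 1) → ℤ} :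
    IsGT a ↔ IsGT (Fin.init a) ∧
      Fin.init (a (Fin.last (n + 1))) ≤ a (Fin.last n).castSucc ∧
        a (Fin.last n).castSucc ≤ Fin.tail (a (Fin.last (n + 1))) := by
  rw [isGT_iff, Fin.forall_fin_succ', isGT_iff]
  rfl

lemma strictRows_iff {a : ∀ r : Fin n, Fin (r.1 + 1) → ℤ} :
    StrictRows a ↔ ∀ r, StrictMono (a r) := by
  refine forall_congr' fun r => ?_
  rw [Fin.strictMono_iff_lt_succ]
  exact ⟨fun h j => h j.castSucc (Nat.succ_lt_succ j.2),
    fun h j hj => h ⟨j.1, Nat.lt_of_succ_lt_succ hj⟩⟩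

/-- The number of entries equal to `1` in the left diagonal of a triangular array. -/
def leftOnes (a : ∀ r : Fin n, Fin (r.1 + 1) → ℤ) : ℕ :=
  (Finset.univ.filter fun r : Fin n => a r ⟨0, Nat.succ_pos r.1⟩ = 1).card

lemma leftOnes_succ (a : ∀ r : Fin (n + 1), Fin (r.1 + 1) → ℤ) :
    leftOnes a = leftOnes (Fin.init a) + if a (Fin.last n) 0 = 1 then 1 else 0 := by
  simp only [leftOnes, Finset.card_filter]
  exact Fin.sum_univ_castSucc _

/-- The monotone triangles of order `n + 1` with bottom row `k` and exactly `j` entries equal to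
`1` in the left diagonal. -/
def monotoneTriangles (k : Fin (n + 1) → ℤ) (j : ℕ) : Set (∀ r : Fin (n + 1), Fin (r.1 + 1) → ℤ) :=
  {a | IsGT a ∧ StrictRows a ∧ a (Fin.last n) = k ∧ leftOnes a = j}

lemma Arefined_succ (j : ℕ) :
    Arefined (n + 1) j = (monotoneTriangles (fun i : Fin (n + 1) => (i.1 + 1 : ℤ)) j).ncard := by
  rw [Arefined, ← Nat.card_coe_set_eq]
  refine Nat.card_congr (Equiv.subtypeEquivRight fun a => ?_)
  have bottom_iff : (∀ r : Fin (n + 1), r.1 + 1 = n + 1 → ∀ j : Fin (r.1 + 1), a r j = j.1 + 1) ↔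
      a (Fin.last n) = fun i => (i.1 + 1 : ℤ) := by
    refine ⟨fun h => funext (h (Fin.last n) rfl), fun h r hr => ?_⟩
    obtain rfl : r = Fin.last n := Fin.ext (Nat.succ_injective hr)
    exact congrFun h
  rw [bottom_iff]
  rfl

lemma finite_isGT_last_eq (k : Fin (n + 1) → ℤ) :
    {a : ∀ r : Fin (n + 1), Fin (r.1 + 1) → ℤ | IsGT a ∧ a (Fin.last n) = k}.Finite := by
  induction n with
  | zero =>
    refine Set.Subsingleton.finite fun a ha b hb => funext fun r => ?_
    obtain rfl : r = Fin.last 0 := Fin.eq_zero r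
    exact ha.2.trans hb.2.symm
  | succ n ih =>
    refine ((Set.finite_Icc (Fin.init k) (Fin.tail k)).biUnion fun l _ =>
      (ih l).image fun b => Fin.snoc (α := fun r : Fin (n + 2) => Fin (r.1 + 1) → ℤ) b k).subset ?_
    rintro a ⟨ha, rfl⟩
    obtain ⟨ha, hl⟩ := isGT_succ_iff.mp ha
    exact Set.mem_biUnion hl ⟨Fin.init a, ⟨ha, rfl⟩, Fin.snoc_init_self a⟩

lemma finite_monotoneTriangles (k : Fin (n + 1) → ℤ) (j : ℕ) : (monotoneTriangles k j).Finite :=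
  (finite_isGT_last_eq k).subset fun _ ha => ⟨ha.1, ha.2.2.1⟩

lemma snoc_mem_monotoneTriangles {k : Fin (n + 2) → ℤ} (hk : StrictMono k) {j : ℕ}
    {b : ∀ r : Fin (n + 1), Fin (r.1 + 1) → ℤ} :
    Fin.snoc (α := fun r : Fin (n + 2) => Fin (r.1 + 1) → ℤ) b k ∈
        monotoneTriangles k (j + if k 0 = 1 then 1 else 0) ↔
      b (Fin.last n) ∈ strictInterlacing k ∧ b ∈ monotoneTriangles (b (Fin.last n)) j := by
  simp only [monotoneTriangles, Set.mem_ofPred_eq, isGT_succ_iff, leftOnes_succ, strictRows_iff,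
    Fin.forall_fin_succ' (n := n + 1), Fin.init_snoc, Fin.snoc_last, Fin.snoc_castSucc, hk,
    Nat.add_right_cancel_iff, mem_strictInterlacing, and_true, true_and]
  exact ⟨fun ⟨⟨hGT, hl⟩, hrows, hj⟩ => ⟨⟨hl, hrows _⟩, hGT, hrows, rfl, hj⟩,
    fun ⟨⟨hl, _⟩, hGT, hrows, _, hj⟩ => ⟨⟨hGT, hl⟩, hrows, hj⟩⟩

lemma ncard_monotoneTriangles_succ {k : Fin (n + 2) → ℤ} (hk : StrictMono k) (j : ℕ) :
    (monotoneTriangles k (j + if k 0 = 1 then 1 else 0)).ncard =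
      ∑ l ∈ strictInterlacing k, (monotoneTriangles l j).ncard := by
  let appendRow (b : ∀ r : Fin (n + 1), Fin (r.1 + 1) → ℤ) :=
    Fin.snoc (α := fun r : Fin (n + 2) => Fin (r.1 + 1) → ℤ) b k
  have appendRow_injective : appendRow.Injective := fun b b' h => by
    simpa only [appendRow, Fin.init_snoc] using congrArg Fin.init h
  have triangles_eq : monotoneTriangles k (j + if k 0 = 1 then 1 else 0) =
      appendRow '' ⋃ l ∈ strictInterlacing k, monotoneTriangles l j := by
    ext a
    simp only [Set.mem_image, Set.mem_iUnion, exists_prop]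
    constructor
    · intro ha
      obtain rfl : a (Fin.last (n + 1)) = k := ha.2.2.1
      rw [← Fin.snoc_init_self a, Fin.snoc_last, snoc_mem_monotoneTriangles hk] at ha
      exact ⟨Fin.init a, ⟨_, ha⟩, Fin.snoc_init_self a⟩
    · rintro ⟨b, ⟨l, hl, hb⟩, rfl⟩
      obtain rfl : b (Fin.last n) = l := hb.2.2.1
      exact (snoc_mem_monotoneTriangles hk).mpr ⟨hl, hb⟩
  rw [triangles_eq, Set.ncard_image_of_injective _ appendRow_injective]
  refine (Set.Finite.ncard_biUnion (strictInterlacing k).finite_toSet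
    (fun l _ => finite_monotoneTriangles l j) fun l _ l' _ hll' => ?_).trans
    (finsum_mem_coe_finset _ _)
  exact Set.disjoint_left.mpr fun b hb hb' => hll' (hb.2.2.1.symm.trans hb'.2.2.1)

lemma ncard_monotoneTriangles_fin_one (k : Fin 1 → ℤ) (j : ℕ) :
    (monotoneTriangles k j).ncard = if j = if k 0 = 1 then 1 else 0 then 1 else 0 := by
  have mem_iff (a : ∀ r : Fin 1, Fin (r.1 + 1) → ℤ) :
      a ∈ monotoneTriangles k j ↔ a 0 = k ∧ j = if k 0 = 1 then 1 else 0 := by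
    simp only [monotoneTriangles, Set.mem_ofPred_eq, isGT_iff, strictRows_iff, leftOnes_succ]
    constructor
    · rintro ⟨-, -, rfl, rfl⟩
      exact ⟨rfl, Nat.zero_add _⟩
    · rintro ⟨rfl, rfl⟩
      exact ⟨fun r => r.elim0, Fin.forall_fin_one.mpr (Subsingleton.strictMono (α := Fin 1) _), rfl,
        Nat.zero_add _⟩
  by_cases hj : j = if k 0 = 1 then 1 else 0
  · rw [if_pos hj, Set.ncard_eq_one]
    refine ⟨Fin.cons k fun i => i.elim0, Set.ext fun a => ?_⟩
    rw [mem_iff, and_iff_left hj, Set.mem_singleton_iff]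
    exact ⟨fun h => funext (Fin.forall_fin_one.mpr h), fun h => congrFun h 0⟩
  · rw [if_neg hj, Set.ncard_eq_zero (finite_monotoneTriangles k j)]
    exact Set.eq_empty_of_forall_notMem fun a ha => hj ((mem_iff a).mp ha).2

lemma monotoneTriangles_zero_eq_empty {k : Fin (n + 1) → ℤ} (hk : k 0 = 1) :
    monotoneTriangles k 0 = ∅ := by
  refine Set.eq_empty_of_forall_notMem ?_
  rintro a ⟨-, -, rfl, ha⟩
  rw [leftOnes_succ, if_pos hk] at ha
  exact Nat.succ_ne_zero _ ha

lemma operatorFormula_fin_one (k : Fin 1 → ℤ) : operatorFormula 0 k = 1 := by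
  simp [operatorFormula, weightProd, pairProd, binomDet]

lemma leftOnes_eq_zero {a : ∀ r : Fin (n + 1), Fin (r.1 + 1) → ℤ} (ha : IsGT a)
    (first_gt : 1 < a (Fin.last n) 0) : leftOnes a = 0 := by
  induction n with
  | zero => rw [leftOnes_succ, if_neg first_gt.ne', leftOnes, Finset.univ_eq_empty]; rfl
  | succ n ih =>
    obtain ⟨ha, init_le, -⟩ := isGT_succ_iff.mp ha
    rw [leftOnes_succ, if_neg first_gt.ne',
      ih ha (first_gt.trans_le (init_le (0 : Fin (n + 1))))]

lemma monotoneTriangles_succ_eq_empty {k : Fin (n + 1) → ℤ} (hk : 1 < k 0) (j : ℕ) :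
    monotoneTriangles k (j + 1) = ∅ := by
  refine Set.eq_empty_of_forall_notMem ?_
  rintro a ⟨ha, -, rfl, hj⟩
  exact Nat.succ_ne_zero j (hj.symm.trans (leftOnes_eq_zero ha hk))

lemma ncard_monotoneTriangles_zero {k : Fin (n + 1) → ℤ} (hk : StrictMono k) (first_gt : 1 < k 0) :
    ((monotoneTriangles k 0).ncard : ℤ) = operatorFormula 0 k := by
  induction n with
  | zero =>
    rw [ncard_monotoneTriangles_fin_one, if_neg first_gt.ne', operatorFormula_fin_one]
    rfl
  | succ n ih =>
    have recurrence := ncard_monotoneTriangles_succ hk 0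
    rw [if_neg first_gt.ne', add_zero] at recurrence
    have ncard_rows : ∀ l ∈ strictInterlacing k,
        ((monotoneTriangles l 0).ncard : ℤ) = operatorFormula 0 l := fun l hl => by
      obtain ⟨⟨init_le, -⟩, hl⟩ := mem_strictInterlacing.mp hl
      exact ih hl (first_gt.trans_le (init_le 0))
    rw [recurrence, Nat.cast_sum, Finset.sum_congr rfl ncard_rows]
    rw [← Fin.cons_self_tail k] at hk ⊢
    obtain ⟨first_lt, hk⟩ := Fin.strictMono_cons.mp hk
    exact sum_strictInterlacing_operatorFormula hk fun i => (first_lt i).le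

lemma ncard_monotoneTriangles_cons_one_succ {k : Fin (n + 1) → ℤ} (hk : StrictMono k)
    (hk₁ : ∀ i, 1 < k i) (j : ℕ) :
    (monotoneTriangles (Fin.cons 1 k) (j + 1)).ncard =
      ∑ l ∈ strictInterlacing k, (monotoneTriangles (Fin.cons 1 l) j).ncard +
        ∑ l ∈ strictInterlacing (Fin.cons 2 k), (monotoneTriangles l j).ncard := by
  have recurrence := ncard_monotoneTriangles_succ (Fin.strictMono_cons.mpr ⟨hk₁, hk⟩) j
  rwa [Fin.cons_zero, if_pos rfl, sum_strictInterlacing_cons_of_lt _ (hk₁ 0)] at recurrence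

lemma ncard_monotoneTriangles_cons_one_one {k : Fin n → ℤ} (hk : StrictMono k)
    (hk₁ : ∀ i, 1 < k i) :
    ((monotoneTriangles (Fin.cons 1 k) 1).ncard : ℤ) = operatorFormula 0 (Fin.cons 2 k) := by
  cases n with
  | zero =>
    rw [ncard_monotoneTriangles_fin_one, operatorFormula_fin_one]
    rfl
  | succ n =>
    have sum_rows : ∑ l ∈ strictInterlacing (Fin.cons 2 k), operatorFormula 0 l =
        operatorFormula 0 (Fin.cons 2 k) := sum_strictInterlacing_operatorFormula hk hk₁
    have no_rows_one : ∑ l ∈ strictInterlacing k,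
        (monotoneTriangles (Fin.cons 1 l : Fin (n + 1) → ℤ) 0).ncard = 0 :=
      Finset.sum_eq_zero fun l _ => by rw [monotoneTriangles_zero_eq_empty rfl, Set.ncard_empty]
    rw [ncard_monotoneTriangles_cons_one_succ hk hk₁, no_rows_one, zero_add, Nat.cast_sum,
      ← sum_rows]
    refine Finset.sum_congr rfl fun l hl => ?_
    obtain ⟨⟨init_le, -⟩, hl⟩ := mem_strictInterlacing.mp hl
    exact ncard_monotoneTriangles_zero hl (init_le 0)

lemma ncard_monotoneTriangles_cons_one {k : Fin n → ℤ} (hk : StrictMono k) (hk₁ : ∀ i, 1 < k i)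
    (j : ℕ) :
    ((monotoneTriangles (Fin.cons 1 k) (j + 1)).ncard : ℤ) =
      (-1) ^ j * (fwdDiff 1)^[j] (fun y => operatorFormula 0 (Fin.cons y k)) 2 := by
  induction j generalizing n with
  | zero => simpa using ncard_monotoneTriangles_cons_one_one hk hk₁
  | succ j ih =>
    cases n with
    | zero =>
      have iter_zero : (fwdDiff (1 : ℤ))^[j] (fun _ => (0 : ℤ)) = fun _ => 0 :=
        Function.iterate_fixed (fwdDiff_const 1 0) j
      simp [ncard_monotoneTriangles_fin_one, operatorFormula_fin_one, iter_zero]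
    | succ n =>
      have no_rows_two : ∑ l ∈ strictInterlacing (Fin.cons 2 k),
          (monotoneTriangles l (j + 1)).ncard = 0 := Finset.sum_eq_zero fun l hl => by
        have first_gt : 1 < l 0 := (mem_strictInterlacing.mp hl).1.1 0
        rw [monotoneTriangles_succ_eq_empty first_gt, Set.ncard_empty]
      have ncard_rows_one : ∀ l ∈ strictInterlacing k,
          ((monotoneTriangles (Fin.cons 1 l) (j + 1)).ncard : ℤ) =
            (-1) ^ j * (fwdDiff 1)^[j] (fun y => operatorFormula 0 (Fin.cons y l)) 2 :=
        fun l hl => by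
          obtain ⟨⟨init_le, -⟩, hl⟩ := mem_strictInterlacing.mp hl
          exact ih hl fun i => (hk₁ i.castSucc).trans_le (init_le i)
      have sum_rows : ∑ l ∈ strictInterlacing k, (fun y => operatorFormula 0 (Fin.cons y l)) =
          (-1 : ℤ) • fwdDiff 1 fun y => operatorFormula 0 (Fin.cons y k) := by
        funext y
        rw [← Fin.cons_self_tail k] at hk ⊢
        obtain ⟨first_lt, hk⟩ := Fin.strictMono_cons.mp hk
        simp only [Finset.sum_apply, Pi.smul_apply, neg_one_smul]
        exact sum_strictInterlacing_operatorFormula_cons hk (fun i => (first_lt i).le) y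
      rw [ncard_monotoneTriangles_cons_one_succ hk hk₁, no_rows_two, add_zero, Nat.cast_sum,
        Finset.sum_congr rfl ncard_rows_one, ← Finset.mul_sum, ← Finset.sum_apply,
        ← fwdDiff_iter_finsetSum, sum_rows, fwdDiff_iter_const_smul, ← Function.iterate_succ_apply,
        Pi.smul_apply, smul_eq_mul, ← mul_assoc, ← pow_succ]

lemma Arefined_succ_succ (m j : ℕ) :
    (Arefined (m + 1) (j + 1) : ℤ) = (-1) ^ j *
      (fwdDiff 1)^[j] (fun x => operatorFormula 0 (Fin.cons x fun i : Fin m => (i + 2 : ℤ))) 2 := by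
  have bottom_row : (fun i : Fin (m + 1) => (i.1 + 1 : ℤ)) =
      Fin.cons 1 fun i : Fin m => (i.1 + 2 : ℤ) := by
    funext i
    refine Fin.cases (by simp) (fun i => ?_) i
    simp [add_assoc, one_add_one_eq_two]
  rw [Arefined_succ, bottom_row]
  refine ncard_monotoneTriangles_cons_one (fun i i' h => ?_) (fun i => ?_) j
  · simpa using h
  · omega

lemma Arefined_eq_zero {n j : ℕ} (h : n < j) : Arefined n j = 0 := by
  refine @Nat.card_of_isEmpty _ ⟨?_⟩
  rintro ⟨a, -, -, -, hj⟩
  have card_le := Finset.card_filter_le .univ fun r : Fin n => a r ⟨0, Nat.succ_pos r.1⟩ = 1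
  rw [hj, Finset.card_fin] at card_le
  exact h.not_ge card_le

end Counting

section LinearSystem

lemma fwdDiff_iter_reflect {R : Type*} [CommRing R] {g : ℤ → R} {c : ℤ} {s : R}
    (hg : ∀ x, g (c - x) = s * g x) (j : ℕ) (y : ℤ) :
    (fwdDiff 1)^[j] g (c - y - j) = (-1) ^ j * s * (fwdDiff 1)^[j] g y := by
  induction j generalizing y with
  | zero => simpa using hg y
  | succ j ih =>
    have upper : c - y - (j + 1 : ℕ) + 1 = c - y - j := by push_cast; ring
    have lower : c - y - (j + 1 : ℕ) = c - (y + 1) - j := by push_cast; ring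
    rw [Function.iterate_succ_apply', fwdDiff, fwdDiff, upper, lower, ih, ih]
    ring

lemma Arefined_eq_sum_range {m j : ℕ} (hj : j ≤ m) :
    (Arefined (m + 1) (j + 1) : ℤ) =
      ∑ t ∈ Finset.range (2 * m - j + 1), ((2 * m - j).choose t : ℤ) *
        (-1) ^ (j + 1 + t + (m + 1)) * (Arefined (m + 1) (j + 1 + t) : ℤ) := by
  let g (x : ℤ) : ℤ := operatorFormula 0 (Fin.cons x fun i : Fin m => (i.1 + 2 : ℤ))
  have newton := shift_eq_sum_fwdDiff_iter (1 : ℤ) ((fwdDiff 1)^[j] g) (2 * m - j) 2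
  have endpoint : (2 : ℤ) + (2 * m - j) • (1 : ℤ) = 2 * m + 4 - 2 - j := by
    rw [nsmul_eq_mul, Nat.cast_sub (by omega)]
    push_cast
    ring
  rw [endpoint, fwdDiff_iter_reflect (operatorFormula_reflect m)] at newton
  calc (Arefined (m + 1) (j + 1) : ℤ)
      = (-1) ^ m * ((-1) ^ j * (-1) ^ m * (fwdDiff 1)^[j] g 2) := by
        have square : (-1 : ℤ) ^ m * (-1) ^ m = 1 := pow_mul_pow_eq_one m rfl
        rw [Arefined_succ_succ]
        linear_combination -(-1) ^ j * (fwdDiff 1)^[j] g 2 * square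
    _ = ∑ t ∈ Finset.range (2 * m - j + 1),
          (-1) ^ m * ((2 * m - j).choose t • (fwdDiff 1)^[t] ((fwdDiff 1)^[j] g) 2) := by
        rw [newton, Finset.mul_sum]
    _ = _ := Finset.sum_congr rfl fun t _ => ?_
  have sign : (-1 : ℤ) ^ (t + j + 1 + (m + 1)) * (-1) ^ (t + j) = (-1) ^ m := by
    rw [← pow_add]
    exact neg_one_pow_congr (by grind)
  rw [add_right_comm j 1 t, add_comm j t, Arefined_succ_succ, ← Function.iterate_add_apply,
    nsmul_eq_mul, ← sign]
  ring

lemma Arefined_eq_sum_Ico {n i : ℕ} (hi : 1 ≤ i) (hin : i ≤ n) :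
    (Arefined n i : ℤ) = ∑ k ∈ Finset.Ico i (2 * n),
      ((2 * n - 1 - i).choose (k - i) : ℤ) * (-1) ^ (k + n) * (Arefined n k : ℤ) := by
  obtain ⟨m, rfl⟩ : ∃ m, n = m + 1 := ⟨n - 1, by omega⟩
  obtain ⟨j, rfl⟩ : ∃ j, i = j + 1 := ⟨i - 1, by omega⟩
  have length : 2 * (m + 1) - (j + 1) = 2 * m - j + 1 := by omega
  have upper_index : 2 * (m + 1) - 1 - (j + 1) = 2 * m - j := by omega
  simp only [Arefined_eq_sum_range (Nat.le_of_succ_le_succ hin), Finset.sum_Ico_eq_sum_range,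
    length, upper_index, Nat.add_sub_cancel_left]

end LinearSystem

/-- The refined alternating sign matrix numbers satisfy the linear system
`A_{n,i} = ∑_{k=1}^{n} binom(2n-1-i, k-i) (-1)^{k+n} A_{n,k}` (with `binom(m, j) = 0`
for `j < 0`). -/
theorem refined_asm_linear_system (n : ℕ) (hn : 1 ≤ n) (i : ℕ)
    (hi1 : 1 ≤ i) (hi2 : i ≤ n) :
    (Arefined n i : ℤ) =
      ∑ k ∈ Finset.Icc 1 n,
        (if i ≤ k then ((2 * n - 1 - i).choose (k - i) : ℤ) else 0) *
          (-1 : ℤ) ^ (k + n) * (Arefined n k : ℤ) := by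
  let f (k : ℕ) : ℤ := (2 * n - 1 - i).choose (k - i) * (-1) ^ (k + n) * Arefined n k
  calc (Arefined n i : ℤ)
      = ∑ k ∈ Finset.Ico i (2 * n), f k := Arefined_eq_sum_Ico hi1 hi2
    _ = ∑ k ∈ Finset.Icc i n, f k := by
        refine (Finset.sum_subset (fun k hk => ?_) fun k hk hkn => ?_).symm
        · simp only [Finset.mem_Icc, Finset.mem_Ico] at hk ⊢
          omega
        · simp only [Finset.mem_Icc, Finset.mem_Ico] at hk hkn
          simp [f, Arefined_eq_zero (n := n) (j := k) (by omega)]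
    _ = ∑ k ∈ Finset.Icc 1 n with i ≤ k, f k := by
        congr 1
        grind
    _ = _ := by simp only [Finset.sum_filter, ite_mul, zero_mul, f]
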